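/- arXiv:1502.04974 — 3 statements merged into one kernel-verified Lean document; each statement's English description precedes it below -/
import Mathlib

section
/- Let a > 0, ε ∈ ℝ, m₀ a nonzero integer, Y : [−1, 1] → ℂ twice continuously differentiable, and let u be the separated field of zonal wavenumber m₀ with profile Y; write u¹ = Re u, u² = Im u. Let g : [−1, 1] → ℝ be continuous and set w = (g(y), 0). Then G(u¹, u¹, w) = G(u², u², w) and G(u¹, u², w) = −G(u², u¹, w), where G(u, v, w) = −ε ∫_Ω ((u·∇)v)·conj(w) dx dy. -/
open Complex

/-- Partial derivative in `x`. -/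
noncomputable def pdx (f : ℝ → ℝ → ℂ) : ℝ → ℝ → ℂ :=
  fun x y => deriv (fun t => f t y) x

/-- Partial derivative in `y`. -/
noncomputable def pdy (f : ℝ → ℝ → ℂ) : ℝ → ℝ → ℂ :=
  fun x y => deriv (fun t => f x t) y

/-- First component of a complex vector field. -/
def c1 (u : ℝ → ℝ → ℂ × ℂ) : ℝ → ℝ → ℂ := fun x y => (u x y).1

/-- Second component of a complex vector field. -/
def c2 (u : ℝ → ℝ → ℂ × ℂ) : ℝ → ℝ → ℂ := fun x y => (u x y).2

/-- The trilinear form `G(u,v,w) = -ε ∫_Ω ((u·∇)v)·conj(w) dx dy` over the channel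
`Ω = (0, 2/a) × (-1, 1)`. -/
noncomputable def trilinG (a ε : ℝ) (u v w : ℝ → ℝ → ℂ × ℂ) : ℂ :=
  -(ε : ℂ) * ∫ x in (0 : ℝ)..(2 / a), ∫ y in (-1 : ℝ)..1,
    ((c1 u x y * pdx (c1 v) x y + c2 u x y * pdy (c1 v) x y) * (starRingEnd ℂ) (c1 w x y)
      + (c1 u x y * pdx (c2 v) x y + c2 u x y * pdy (c2 v) x y) * (starRingEnd ℂ) (c2 w x y))

/-- The separated field of zonal wavenumber `p` with profile `Y`:
`u = (∂ψ/∂y, -∂ψ/∂x)` where `ψ(x,y) = e^{i a p π x} Y(y)`. -/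
noncomputable def sepField (a : ℝ) (p : ℤ) (Y : ℝ → ℂ) : ℝ → ℝ → ℂ × ℂ :=
  fun x y =>
    (pdy (fun (x y : ℝ) =>
        Complex.exp (Complex.I * ((a * p * Real.pi : ℝ) : ℂ) * ((x : ℝ) : ℂ)) * Y y) x y,
     -pdx (fun (x y : ℝ) =>
        Complex.exp (Complex.I * ((a * p * Real.pi : ℝ) : ℂ) * ((x : ℝ) : ℂ)) * Y y) x y)

/-- Real part of a complex vector field, viewed again as a complex vector field. -/
noncomputable def reField (u : ℝ → ℝ → ℂ × ℂ) : ℝ → ℝ → ℂ × ℂ :=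
  fun x y => (((u x y).1.re : ℂ), ((u x y).2.re : ℂ))

/-- Imaginary part of a complex vector field, viewed again as a complex vector field. -/
noncomputable def imField (u : ℝ → ℝ → ℂ × ℂ) : ℝ → ℝ → ℂ × ℂ :=
  fun x y => (((u x y).1.im : ℂ), ((u x y).2.im : ℂ))

/-- Translation in `x` multiplies a separated field by a phase. -/
lemma sepField_shift (a : ℝ) (p : ℤ) (Y : ℝ → ℂ) (c : ℝ) (z : ℂ)
    (hz : Complex.exp (Complex.I * ((a * p * Real.pi : ℝ) : ℂ) * (c : ℂ)) = z) (x y : ℝ) :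
    sepField a p Y (x + c) y = (z * (sepField a p Y x y).1, z * (sepField a p Y x y).2) := by
  have key : ∀ x : ℝ, Complex.exp (Complex.I * ((a * p * Real.pi : ℝ) : ℂ) * ((x + c : ℝ) : ℂ))
      = z * Complex.exp (Complex.I * ((a * p * Real.pi : ℝ) : ℂ) * (x : ℂ)) := by
    intro x
    rw [← hz, ← Complex.exp_add]
    congr 1
    push_cast
    ring
  unfold sepField pdx pdy
  refine Prod.ext ?_ ?_
  · simp only [key, mul_assoc z, deriv_const_mul_field]
  · simp only []
    rw [← deriv_comp_add_const]
    simp only [key]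
    simp only [mul_assoc z, deriv_const_mul_field]
    ring

/-- The inner integral of the trilinear form. -/
noncomputable def innerG (u v w : ℝ → ℝ → ℂ × ℂ) (x : ℝ) : ℂ :=
  ∫ y in (-1 : ℝ)..1,
    ((c1 u x y * pdx (c1 v) x y + c2 u x y * pdy (c1 v) x y) * (starRingEnd ℂ) (c1 w x y)
      + (c1 u x y * pdx (c2 v) x y + c2 u x y * pdy (c2 v) x y) * (starRingEnd ℂ) (c2 w x y))

lemma innerG_shift (u v w : ℝ → ℝ → ℂ × ℂ) (c : ℝ) (hw : ∀ x y, w (x + c) y = w x y) (x : ℝ) :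
    innerG u v w (x + c) = innerG (fun x y => u (x + c) y) (fun x y => v (x + c) y) w x := by
  unfold innerG
  congr 1
  funext y
  simp only [c1, c2, pdx, pdy, hw]
  rw [← deriv_comp_add_const, ← deriv_comp_add_const]

lemma innerG_neg_left (u v w : ℝ → ℝ → ℂ × ℂ) (x : ℝ) :
    innerG (fun x y => -u x y) v w x = -innerG u v w x := by
  unfold innerG
  rw [← intervalIntegral.integral_neg]
  congr 1
  funext y
  simp only [c1, c2, Prod.fst_neg, Prod.snd_neg]
  ring

lemma innerG_neg_right (u v w : ℝ → ℝ → ℂ × ℂ) (x : ℝ) :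
    innerG u (fun x y => -v x y) w x = -innerG u v w x := by
  unfold innerG
  rw [← intervalIntegral.integral_neg]
  congr 1
  funext y
  simp only [c1, c2, pdx, pdy, Prod.fst_neg, Prod.snd_neg, deriv.fun_neg]
  ring

/-- Interaction symmetries of the real and imaginary parts `u¹, u²` of a separated field of
nonzero zonal wavenumber `m₀` with a zonal-mean field `w = (g(y), 0)`:
`G(u¹,u¹,w) = G(u²,u²,w)` and `G(u¹,u²,w) = -G(u²,u¹,w)`. -/
theorem zonal_mean_interaction_symmetries (a ε : ℝ) (ha : 0 < a)
    (m₀ : ℤ) (hm₀ : m₀ ≠ 0)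
    (Y : ℝ → ℂ) (hY : ContDiff ℝ 2 Y)
    (g : ℝ → ℝ) (hg : Continuous g)
    (u1 u2 w : ℝ → ℝ → ℂ × ℂ)
    (hu1 : u1 = reField (sepField a m₀ Y))
    (hu2 : u2 = imField (sepField a m₀ Y))
    (hw : w = fun (_ y : ℝ) => (((g y : ℝ) : ℂ), (0 : ℂ))) :
    trilinG a ε u1 u1 w = trilinG a ε u2 u2 w ∧
    trilinG a ε u1 u2 w = -trilinG a ε u2 u1 w := by
  have hm : (m₀ : ℂ) ≠ 0 := by exact_mod_cast hm₀
  have haC : (a : ℂ) ≠ 0 := by exact_mod_cast ha.ne'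
  have hP := sepField_shift a m₀ Y (2 / a) 1 (by
    rw [Complex.exp_eq_one_iff]
    refine ⟨m₀, ?_⟩
    push_cast
    field_simp)
  have hS := sepField_shift a m₀ Y (1 / (2 * a * m₀)) Complex.I (by
    have h : Complex.exp (Real.pi / 2 * Complex.I) = Complex.I := by simp
    refine Eq.trans ?_ h
    congr 1
    push_cast
    field_simp)
  set s : ℝ := 1 / (2 * a * m₀)
  have hwc : ∀ c x y, w (x + c) y = w x y := by intro c x y; rw [hw]
  have p1 : (fun x y => u1 (x + 2 / a) y) = u1 := by
    funext x y; simp [hu1, reField, hP]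
  have p2 : (fun x y => u2 (x + 2 / a) y) = u2 := by
    funext x y; simp [hu2, imField, hP]
  have s1 : (fun x y => u1 (x + s) y) = fun x y => -u2 x y := by
    funext x y; simp [hu1, hu2, reField, imField, hS]
  have s2 : (fun x y => u2 (x + s) y) = u1 := by
    funext x y; simp [hu1, hu2, reField, imField, hS]
  have main : ∀ u v : ℝ → ℝ → ℂ × ℂ, (fun x y => u (x + 2 / a) y) = u →
      (fun x y => v (x + 2 / a) y) = v →
      trilinG a ε u v w = -(ε : ℂ) * ∫ x in (0 : ℝ)..(2 / a), innerG u v w (x + s) := by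
    intro u v hu hv
    have per : Function.Periodic (innerG u v w) (2 / a) := by
      intro x
      rw [innerG_shift u v w _ (hwc _), hu, hv]
    rw [intervalIntegral.integral_comp_add_right, zero_add, add_comm (2 / a) s,
      per.intervalIntegral_add_eq s 0, zero_add]
    rfl
  constructor
  · rw [main u1 u1 p1 p1]
    simp only [innerG_shift _ _ w s (hwc s), s1, innerG_neg_left, innerG_neg_right, neg_neg]
    rfl
  · rw [main u1 u2 p1 p2]
    simp only [innerG_shift _ _ w s (hwc s), s1, s2, innerG_neg_left,
      intervalIntegral.integral_neg, mul_neg]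
    rfl
end

section
/- Let a > 0, ε ∈ ℝ, m₀ a nonzero integer, Y : [−1, 1] → ℂ twice continuously differentiable, and let u be the separated field of zonal wavenumber m₀ with profile Y; write u¹ = Re u, u² = Im u. Let Z : [−1, 1] → ℂ be continuously differentiable, let v be the separated field of zonal wavenumber 2m₀ with profile Z, and write w¹ = Re v, w² = Im v. Then for j = 1, 2: G(u¹, u¹, wʲ) = −G(u², u², wʲ) and G(u¹, u², wʲ) = G(u², u¹, wʲ), where G(u, v, w) = −ε ∫_Ω ((u·∇)v)·conj(w) dx dy. -/
open Complex

/-- Translation of a field in the zonal direction. -/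
def shiftF (s : ℝ) (u : ℝ → ℝ → ℂ × ℂ) : ℝ → ℝ → ℂ × ℂ := fun x y => u (x + s) y

lemma sep_shift (a s : ℝ) (p : ℤ) (Y : ℝ → ℂ) (c : ℂ)
    (hc : Complex.exp (Complex.I * ((a * p * Real.pi : ℝ) : ℂ) * (s : ℂ)) = c) (x y : ℝ) :
    sepField a p Y (x + s) y = (c * (sepField a p Y x y).1, c * (sepField a p Y x y).2) := by
  have key : ∀ t : ℝ, Complex.exp (Complex.I * ((a * p * Real.pi : ℝ) : ℂ) * ((t + s : ℝ) : ℂ))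
      = c * Complex.exp (Complex.I * ((a * p * Real.pi : ℝ) : ℂ) * (t : ℂ)) := by
    intro t
    rw [← hc, ← Complex.exp_add]
    congr 1
    push_cast
    ring
  unfold sepField pdx pdy
  ext1
  · simp only [key, mul_assoc c]
    rw [deriv_const_mul_field]
  · simp only
    rw [← deriv_comp_add_const, mul_neg, ← deriv_const_mul_field]
    simp only [key, mul_assoc c]

lemma trilin_shift (a ε s : ℝ) (u v w : ℝ → ℝ → ℂ × ℂ)
    (hu : shiftF (2 / a) u = u) (hv : shiftF (2 / a) v = v) (hw : shiftF (2 / a) w = w) :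
    trilinG a ε u v w = trilinG a ε (shiftF s u) (shiftF s v) (shiftF s w) := by
  have hx : ∀ (r : ℝ) (f : ℝ → ℝ → ℂ) (x y : ℝ),
      pdx (fun x y => f (x + r) y) x y = pdx f (x + r) y := by
    intro r f x y
    exact deriv_comp_add_const (fun t => f t y) r x
  let F : (ℝ → ℝ → ℂ × ℂ) → (ℝ → ℝ → ℂ × ℂ) → (ℝ → ℝ → ℂ × ℂ) → ℝ → ℂ :=
    fun u v w x => ∫ y in (-1 : ℝ)..1,
    ((c1 u x y * pdx (c1 v) x y + c2 u x y * pdy (c1 v) x y) * (starRingEnd ℂ) (c1 w x y)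
      + (c1 u x y * pdx (c2 v) x y + c2 u x y * pdy (c2 v) x y) * (starRingEnd ℂ) (c2 w x y))
  have hF : ∀ (r x : ℝ), F (shiftF r u) (shiftF r v) (shiftF r w) x = F u v w (x + r) := by
    intro r x
    have h1 : ∀ y, pdx (c1 (shiftF r v)) x y = pdx (c1 v) (x + r) y := fun y => hx r (c1 v) x y
    have h2 : ∀ y, pdx (c2 (shiftF r v)) x y = pdx (c2 v) (x + r) y := fun y => hx r (c2 v) x y
    simp only [F, h1, h2]
    rfl
  have hper : Function.Periodic (F u v w) (2 / a) := by
    intro x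
    rw [← hF, hu, hv, hw]
  change -(ε : ℂ) * ∫ x in (0 : ℝ)..(2 / a), F u v w x
    = -(ε : ℂ) * ∫ x in (0 : ℝ)..(2 / a), F (shiftF s u) (shiftF s v) (shiftF s w) x
  simp only [hF]
  rw [intervalIntegral.integral_comp_add_right (fun x => F u v w x) s]
  have := hper.intervalIntegral_add_eq 0 s
  rw [zero_add] at this
  rw [this, zero_add, add_comm s]

lemma c1_neg (u : ℝ → ℝ → ℂ × ℂ) (x y : ℝ) : c1 (-u) x y = - c1 u x y := rfl
lemma c2_neg (u : ℝ → ℝ → ℂ × ℂ) (x y : ℝ) : c2 (-u) x y = - c2 u x y := rfl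

lemma trilin_neg1 (a ε : ℝ) (u v w : ℝ → ℝ → ℂ × ℂ) :
    trilinG a ε (-u) v w = - trilinG a ε u v w := by
  unfold trilinG
  simp only [c1_neg, c2_neg]
  rw [← mul_neg, ← intervalIntegral.integral_neg]
  simp only [← intervalIntegral.integral_neg]
  congr 3; ext x; congr 1; ext y; ring

lemma trilin_neg2 (a ε : ℝ) (u v w : ℝ → ℝ → ℂ × ℂ) :
    trilinG a ε u (-v) w = - trilinG a ε u v w := by
  unfold trilinG
  simp only [pdx, pdy, c1_neg, c2_neg, deriv.fun_neg]
  rw [← mul_neg, ← intervalIntegral.integral_neg]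
  simp only [← intervalIntegral.integral_neg]
  congr 3; ext x; congr 1; ext y; ring

lemma trilin_neg3 (a ε : ℝ) (u v w : ℝ → ℝ → ℂ × ℂ) :
    trilinG a ε u v (-w) = - trilinG a ε u v w := by
  unfold trilinG
  simp only [c1_neg, c2_neg, map_neg]
  rw [← mul_neg, ← intervalIntegral.integral_neg]
  simp only [← intervalIntegral.integral_neg]
  congr 3; ext x; congr 1; ext y; ring

lemma exp_period (a : ℝ) (ha : 0 < a) (p : ℤ) :
    Complex.exp (Complex.I * ((a * p * Real.pi : ℝ) : ℂ) * ((2 / a : ℝ) : ℂ)) = 1 := by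
  rw [← Complex.exp_int_mul_two_pi_mul_I p]
  congr 1
  have : (a : ℂ) ≠ 0 := by exact_mod_cast ha.ne'
  push_cast
  field_simp

lemma exp_quarter (a : ℝ) (ha : 0 < a) (p : ℤ) (hp : p ≠ 0) :
    Complex.exp (Complex.I * ((a * p * Real.pi : ℝ) : ℂ) * ((1 / (2 * a * p) : ℝ) : ℂ)) = I := by
  refine Eq.trans ?_ Complex.exp_pi_div_two_mul_I
  congr 1
  have : (a : ℂ) ≠ 0 := by exact_mod_cast ha.ne'
  have : (p : ℂ) ≠ 0 := by exact_mod_cast hp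
  push_cast
  field_simp

lemma exp_half (a : ℝ) (ha : 0 < a) (p : ℤ) (hp : p ≠ 0) :
    Complex.exp (Complex.I * ((a * (2 * p : ℤ) * Real.pi : ℝ) : ℂ)
      * ((1 / (2 * a * p) : ℝ) : ℂ)) = -1 := by
  rw [← Complex.exp_pi_mul_I]
  congr 1
  have : (a : ℂ) ≠ 0 := by exact_mod_cast ha.ne'
  have : (p : ℂ) ≠ 0 := by exact_mod_cast hp
  push_cast
  field_simp

/-- Interaction symmetries of the real/imaginary parts `u¹, u²` of a separated field of nonzero
zonal wavenumber `m₀` with the real/imaginary parts `w¹, w²` of a separated field of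
wavenumber `2m₀`: for `j = 1, 2`, `G(u¹,u¹,wʲ) = -G(u²,u²,wʲ)` and
`G(u¹,u²,wʲ) = G(u²,u¹,wʲ)`. -/
theorem double_wavenumber_interaction_symmetries (a ε : ℝ) (ha : 0 < a)
    (m₀ : ℤ) (hm₀ : m₀ ≠ 0)
    (Y : ℝ → ℂ) (hY : ContDiff ℝ 2 Y)
    (Z : ℝ → ℂ) (hZ : ContDiff ℝ 1 Z)
    (u1 u2 w1 w2 : ℝ → ℝ → ℂ × ℂ)
    (hu1 : u1 = reField (sepField a m₀ Y))
    (hu2 : u2 = imField (sepField a m₀ Y))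
    (hw1 : w1 = reField (sepField a (2 * m₀) Z))
    (hw2 : w2 = imField (sepField a (2 * m₀) Z)) :
    (trilinG a ε u1 u1 w1 = -trilinG a ε u2 u2 w1 ∧
      trilinG a ε u1 u2 w1 = trilinG a ε u2 u1 w1) ∧
    (trilinG a ε u1 u1 w2 = -trilinG a ε u2 u2 w2 ∧
      trilinG a ε u1 u2 w2 = trilinG a ε u2 u1 w2) := by
  have Pre : ∀ (p : ℤ) (W : ℝ → ℂ),
      shiftF (2 / a) (reField (sepField a p W)) = reField (sepField a p W) := by
    intro p W
    funext x y
    simp [shiftF, reField, sep_shift a (2 / a) p W 1 (exp_period a ha p)]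
  have Pim : ∀ (p : ℤ) (W : ℝ → ℂ),
      shiftF (2 / a) (imField (sepField a p W)) = imField (sepField a p W) := by
    intro p W
    funext x y
    simp [shiftF, imField, sep_shift a (2 / a) p W 1 (exp_period a ha p)]
  have pu1 : shiftF (2 / a) u1 = u1 := by rw [hu1]; exact Pre _ _
  have pu2 : shiftF (2 / a) u2 = u2 := by rw [hu2]; exact Pim _ _
  have pw1 : shiftF (2 / a) w1 = w1 := by rw [hw1]; exact Pre _ _
  have pw2 : shiftF (2 / a) w2 = w2 := by rw [hw2]; exact Pim _ _
  have su1 : shiftF (1 / (2 * a * m₀)) u1 = -u2 := by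
    rw [hu1, hu2]
    funext x y
    simp only [shiftF, reField, sep_shift a _ m₀ Y I (exp_quarter a ha m₀ hm₀)]
    simp [imField]
  have su2 : shiftF (1 / (2 * a * m₀)) u2 = u1 := by
    rw [hu1, hu2]
    funext x y
    simp only [shiftF, imField, sep_shift a _ m₀ Y I (exp_quarter a ha m₀ hm₀)]
    simp [reField]
  have sw1 : shiftF (1 / (2 * a * m₀)) w1 = -w1 := by
    rw [hw1]
    funext x y
    simp only [shiftF, reField, sep_shift a _ (2 * m₀) Z (-1) (exp_half a ha m₀ hm₀)]
    simp [reField]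
  have sw2 : shiftF (1 / (2 * a * m₀)) w2 = -w2 := by
    rw [hw2]
    funext x y
    simp only [shiftF, imField, sep_shift a _ (2 * m₀) Z (-1) (exp_half a ha m₀ hm₀)]
    simp [imField]
  refine ⟨⟨?_, ?_⟩, ?_, ?_⟩
  · rw [trilin_shift a ε (1 / (2 * a * m₀)) u1 u1 w1 pu1 pu1 pw1, su1, sw1,
      trilin_neg1, trilin_neg2, trilin_neg3, neg_neg]
  · rw [trilin_shift a ε (1 / (2 * a * m₀)) u1 u2 w1 pu1 pu2 pw1, su1, su2, sw1,
      trilin_neg1, trilin_neg3, neg_neg]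
  · rw [trilin_shift a ε (1 / (2 * a * m₀)) u1 u1 w2 pu1 pu1 pw2, su1, sw2,
      trilin_neg1, trilin_neg2, trilin_neg3, neg_neg]
  · rw [trilin_shift a ε (1 / (2 * a * m₀)) u1 u2 w2 pu1 pu2 pw2, su1, su2, sw2,
      trilin_neg1, trilin_neg3, neg_neg]
end

section
/- Let a > 0, ε ∈ ℝ, m₀ a nonzero integer, Y : [−1, 1] → ℂ twice continuously differentiable, and let u be the separated field of zonal wavenumber m₀ with profile Y; write u¹ = Re u, u² = Im u. Let Z : [−1, 1] → ℂ be continuously differentiable, let v be the separated field of zonal wavenumber 2m₀ with profile Z, and write w¹ = Re v, w² = Im v. Then G(u¹, u¹, w¹) = G(u¹, u², w²) and G(u¹, u¹, w²) = −G(u¹, u², w¹); equivalently, for the complex field v one has G(u¹, u¹, v) = i G(u¹, u², v), where G(u, v, w) = −ε ∫_Ω ((u·∇)v)·conj(w) dx dy. -/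
open Complex

/-- The zonal exponential factor. -/
noncomputable def zexp (k : ℝ) (x : ℝ) : ℂ := Complex.exp (Complex.I * (k : ℂ) * (x : ℂ))

lemma zexp_hasDerivAt (k x : ℝ) : HasDerivAt (zexp k) (Complex.I * k * zexp k x) x := by
  have h1 : HasDerivAt (fun x : ℝ => Complex.I * (k : ℂ) * (x : ℂ)) (Complex.I * k * 1) x :=
    (Complex.ofRealCLM.hasDerivAt (x := x)).const_mul (Complex.I * (k : ℂ))
  have h2 := h1.cexp
  unfold zexp
  convert h2 using 1
  ring

lemma zexp_continuous (k : ℝ) : Continuous (zexp k) := by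
  unfold zexp; fun_prop

lemma zexp_two (k x : ℝ) : zexp (2 * k) x = zexp k x ^ 2 := by
  unfold zexp
  rw [← Complex.exp_nat_mul]
  congr 1
  push_cast
  ring

lemma zexp_mul_conj (k x : ℝ) : zexp k x * (starRingEnd ℂ) (zexp k x) = 1 := by
  unfold zexp
  rw [← Complex.exp_conj, ← Complex.exp_add]
  simp

lemma zexp_conj (k x : ℝ) : (starRingEnd ℂ) (zexp k x) = zexp (-k) x := by
  unfold zexp
  rw [← Complex.exp_conj]
  simp

lemma sepField_eq (a : ℝ) (p : ℤ) (Y : ℝ → ℂ) (hY : Differentiable ℝ Y) :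
    sepField a p Y = fun x y => (zexp (a * p * Real.pi) x * deriv Y y,
      -(Complex.I * ((a * p * Real.pi : ℝ) : ℂ) * zexp (a * p * Real.pi) x * Y y)) := by
  funext x y
  unfold sepField pdy pdx
  refine Prod.ext ?_ ?_
  · exact ((hY y).hasDerivAt.const_mul (zexp (a * p * Real.pi) x)).deriv
  · exact congrArg Neg.neg ((zexp_hasDerivAt (a * p * Real.pi) x).mul_const (Y y)).deriv

lemma deriv_re (f : ℝ → ℂ) (f' : ℂ) (x : ℝ) (h : HasDerivAt f f' x) :
    deriv (fun t => ((f t).re : ℂ)) x = (f'.re : ℂ) :=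
  ((Complex.ofRealCLM.comp Complex.reCLM).hasFDerivAt.comp_hasDerivAt x h).deriv

lemma deriv_im (f : ℝ → ℂ) (f' : ℂ) (x : ℝ) (h : HasDerivAt f f' x) :
    deriv (fun t => ((f t).im : ℂ)) x = (f'.im : ℂ) :=
  ((Complex.ofRealCLM.comp Complex.imCLM).hasFDerivAt.comp_hasDerivAt x h).deriv

/-- Double integral over the channel. -/
noncomputable def dbl (L : ℝ) (F : ℝ → ℝ → ℂ) : ℂ :=
  ∫ x in (0 : ℝ)..L, ∫ y in (-1 : ℝ)..1, F x y

lemma dbl_lin (L : ℝ) (F G : ℝ → ℝ → ℂ) (hF : Continuous (Function.uncurry F))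
    (hG : Continuous (Function.uncurry G)) (c : ℂ) :
    dbl L (fun x y => F x y - c * G x y) = dbl L F - c * dbl L G := by
  have cF : Continuous (fun x => ∫ y in (-1 : ℝ)..1, F x y) :=
    intervalIntegral.continuous_parametric_intervalIntegral_of_continuous' hF _ _
  have cG : Continuous (fun x => ∫ y in (-1 : ℝ)..1, G x y) :=
    intervalIntegral.continuous_parametric_intervalIntegral_of_continuous' hG _ _
  unfold dbl
  rw [← intervalIntegral.integral_const_mul, ← intervalIntegral.integral_sub
    (cF.intervalIntegrable _ _) ((cG.intervalIntegrable _ _).const_mul c)]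
  congr 1
  funext x
  have hFx : Continuous (F x) := hF.comp (Continuous.prodMk_right x)
  have hGx : Continuous (G x) := hG.comp (Continuous.prodMk_right x)
  rw [← intervalIntegral.integral_const_mul, ← intervalIntegral.integral_sub
    (hFx.intervalIntegrable _ _) ((hGx.intervalIntegrable _ _).const_mul c)]

lemma dbl_real (L : ℝ) (F : ℝ → ℝ → ℝ) : ∃ r : ℝ, dbl L (fun x y => (F x y : ℂ)) = r := by
  refine ⟨∫ x in (0 : ℝ)..L, ∫ y in (-1 : ℝ)..1, F x y, ?_⟩
  unfold dbl
  simp only [intervalIntegral.integral_ofReal]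

lemma zexp_integral (a : ℝ) (ha : 0 < a) (n : ℤ) (hn : n ≠ 0) :
    ∫ x in (0 : ℝ)..(2 / a), zexp (a * n * Real.pi) x = 0 := by
  unfold zexp
  have hc : Complex.I * ((a * n * Real.pi : ℝ) : ℂ) ≠ 0 := by
    have : (a * n * Real.pi : ℝ) ≠ 0 := by
      have := Real.pi_ne_zero
      have : (n : ℝ) ≠ 0 := by exact_mod_cast hn
      positivity
    exact mul_ne_zero Complex.I_ne_zero (by exact_mod_cast this)
  rw [integral_exp_mul_complex hc]
  have h : Complex.I * ((a * n * Real.pi : ℝ) : ℂ) * ((2 / a : ℝ) : ℂ)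
      = n * (2 * Real.pi * Complex.I) := by
    have : (a : ℂ) ≠ 0 := by exact_mod_cast ha.ne'
    push_cast
    field_simp
  rw [h, Complex.exp_int_mul_two_pi_mul_I]
  simp

lemma dbl_sep (L k : ℝ) (A : ℝ → ℂ) (h : ∫ x in (0 : ℝ)..L, zexp k x = 0) :
    dbl L (fun x y => zexp k x * A y) = 0 := by
  unfold dbl
  simp only [intervalIntegral.integral_const_mul, intervalIntegral.integral_mul_const, h, zero_mul]

/-- Pointwise integrand. -/
noncomputable def ker (p q a b c d z w : ℂ) : ℂ :=
  (p * a + q * b) * (starRingEnd ℂ) z + (p * c + q * d) * (starRingEnd ℂ) w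

lemma ker_real (p q a b c d z w : ℝ) :
    ker p q a b c d z w = (((p * a + q * b) * z + (p * c + q * d) * w : ℝ) : ℂ) := by
  unfold ker
  simp only [Complex.conj_ofReal]
  push_cast
  ring

lemma ker_split (p q a b c d z w : ℂ) :
    ker p q a b c d z w = ker p q a b c d z.re w.re - Complex.I * ker p q a b c d z.im w.im := by
  unfold ker
  have h : ∀ z : ℂ, (starRingEnd ℂ) z = z.re - Complex.I * z.im := by
    intro z; apply Complex.ext <;> simp
  rw [h z, h w]
  simp only [Complex.conj_ofReal]
  ring

lemma ker_conj (p q a b c d z w : ℂ) :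
    ker p.re q.re a.re b.re c.re d.re z w - Complex.I * ker p.re q.re a.im b.im c.im d.im z w
    = (((p + (starRingEnd ℂ) p) / 2 * (starRingEnd ℂ) a
        + (q + (starRingEnd ℂ) q) / 2 * (starRingEnd ℂ) b) * (starRingEnd ℂ) z
      + ((p + (starRingEnd ℂ) p) / 2 * (starRingEnd ℂ) c
        + (q + (starRingEnd ℂ) q) / 2 * (starRingEnd ℂ) d) * (starRingEnd ℂ) w) := by
  unfold ker
  have h : ∀ z : ℂ, (starRingEnd ℂ) z = z.re - Complex.I * z.im := by
    intro z; apply Complex.ext <;> simp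
  have h2 : ∀ z : ℂ, (z.re : ℂ) = (z + (starRingEnd ℂ) z) / 2 := by
    intro z; rw [Complex.add_conj]; push_cast; ring
  rw [← h2 p, ← h2 q, h a, h b, h c, h d]
  ring

/-- Further interaction identities between the real/imaginary parts `u¹, u²` of a separated
field of nonzero zonal wavenumber `m₀` and the real/imaginary parts `w¹, w²` of a separated
field `v` of wavenumber `2m₀`: `G(u¹,u¹,w¹) = G(u¹,u²,w²)`, `G(u¹,u¹,w²) = -G(u¹,u²,w¹)`;
equivalently, for the complex field `v`, `G(u¹,u¹,v) = i G(u¹,u²,v)`. -/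
theorem double_wavenumber_interaction_identities (a ε : ℝ) (ha : 0 < a)
    (m₀ : ℤ) (hm₀ : m₀ ≠ 0)
    (Y : ℝ → ℂ) (hY : ContDiff ℝ 2 Y)
    (Z : ℝ → ℂ) (hZ : ContDiff ℝ 1 Z)
    (u1 u2 v w1 w2 : ℝ → ℝ → ℂ × ℂ)
    (hu1 : u1 = reField (sepField a m₀ Y))
    (hu2 : u2 = imField (sepField a m₀ Y))
    (hv : v = sepField a (2 * m₀) Z)
    (hw1 : w1 = reField v)
    (hw2 : w2 = imField v) :
    trilinG a ε u1 u1 w1 = trilinG a ε u1 u2 w2 ∧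
    trilinG a ε u1 u1 w2 = -trilinG a ε u1 u2 w1 ∧
    trilinG a ε u1 u1 v = Complex.I * trilinG a ε u1 u2 v := by
  have dY : Differentiable ℝ Y := hY.differentiable (by norm_num)
  have hY1 : ContDiff ℝ 1 (deriv Y) := by
    have : ContDiff ℝ (1 + 1) Y := by simpa [one_add_one_eq_two] using hY
    exact (contDiff_succ_iff_deriv.1 this).2.2
  have dY1 : Differentiable ℝ (deriv Y) := hY1.differentiable (by norm_num)
  have cY2 : Continuous (deriv (deriv Y)) := hY1.continuous_deriv le_rfl
  have cY1 := dY1.continuous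
  have cY := dY.continuous
  have dZ : Differentiable ℝ Z := hZ.differentiable (by norm_num)
  have cZ := dZ.continuous
  have cZ1 : Continuous (deriv Z) := hZ.continuous_deriv le_rfl
  rw [sepField_eq a m₀ Y dY] at hu1 hu2
  rw [sepField_eq a _ Z dZ] at hv
  have hk2 : (a * ((2 * m₀ : ℤ) : ℝ) * Real.pi) = 2 * (a * m₀ * Real.pi) := by push_cast; ring
  have i2 := zexp_integral a ha (-(2 * m₀)) (by omega)
  have i4 := zexp_integral a ha (-(4 * m₀)) (by omega)
  have e2 : (a * ((-(2 * m₀) : ℤ) : ℝ) * Real.pi) = -(2 * (a * m₀ * Real.pi)) := by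
    push_cast; ring
  have e4 : (a * ((-(4 * m₀) : ℤ) : ℝ) * Real.pi) = -(2 * (2 * (a * m₀ * Real.pi))) := by
    push_cast; ring
  rw [e2] at i2
  rw [e4] at i4
  rw [hk2] at hv
  generalize a * (m₀ : ℝ) * Real.pi = k at *
  have cE : Continuous (zexp k) := zexp_continuous k
  have cE2 : Continuous (zexp (2 * k)) := zexp_continuous _
  -- the complex components
  let P : ℝ → ℝ → ℂ := fun x y => zexp k x * deriv Y y
  let Q : ℝ → ℝ → ℂ := fun x y => -(Complex.I * k * zexp k x * Y y)
  let A : ℝ → ℝ → ℂ := fun x y => Complex.I * k * zexp k x * deriv Y y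
  let B : ℝ → ℝ → ℂ := fun x y => zexp k x * deriv (deriv Y) y
  let C : ℝ → ℝ → ℂ := fun x y => -(Complex.I * k * (Complex.I * k * zexp k x) * Y y)
  let D : ℝ → ℝ → ℂ := fun x y => -(Complex.I * k * zexp k x * deriv Y y)
  let S : ℝ → ℝ → ℂ := fun x y => zexp (2 * k) x * deriv Z y
  let T : ℝ → ℝ → ℂ := fun x y => -(Complex.I * (2 * k : ℝ) * zexp (2 * k) x * Z y)
  have hPx : ∀ x y, HasDerivAt (fun t => P t y) (A x y) x := fun x y =>
    (zexp_hasDerivAt k x).mul_const _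
  have hPy : ∀ x y, HasDerivAt (fun t => P x t) (B x y) y := fun x y =>
    (dY1 y).hasDerivAt.const_mul _
  have hQx : ∀ x y, HasDerivAt (fun t => Q t y) (C x y) x := fun x y =>
    (((zexp_hasDerivAt k x).const_mul (Complex.I * (k : ℂ))).mul_const _).neg
  have hQy : ∀ x y, HasDerivAt (fun t => Q x t) (D x y) y := fun x y =>
    ((dY y).hasDerivAt.const_mul _).neg
  have g1 : ∀ w, trilinG a ε u1 u1 w = -(ε : ℂ) * dbl (2 / a) (fun x y =>
      ker (P x y).re (Q x y).re (A x y).re (B x y).re (C x y).re (D x y).re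
        (c1 w x y) (c2 w x y)) := by
    intro w
    have h1 : ∀ x y, pdx (c1 u1) x y = (A x y).re := fun x y => by
      rw [hu1]; exact deriv_re _ _ _ (hPx x y)
    have h2 : ∀ x y, pdy (c1 u1) x y = (B x y).re := fun x y => by
      rw [hu1]; exact deriv_re _ _ _ (hPy x y)
    have h3 : ∀ x y, pdx (c2 u1) x y = (C x y).re := fun x y => by
      rw [hu1]; exact deriv_re _ _ _ (hQx x y)
    have h4 : ∀ x y, pdy (c2 u1) x y = (D x y).re := fun x y => by
      rw [hu1]; exact deriv_re _ _ _ (hQy x y)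
    unfold trilinG
    simp only [h1, h2, h3, h4]
    rw [hu1]
    rfl
  have g2 : ∀ w, trilinG a ε u1 u2 w = -(ε : ℂ) * dbl (2 / a) (fun x y =>
      ker (P x y).re (Q x y).re (A x y).im (B x y).im (C x y).im (D x y).im
        (c1 w x y) (c2 w x y)) := by
    intro w
    have h1 : ∀ x y, pdx (c1 u2) x y = (A x y).im := fun x y => by
      rw [hu2]; exact deriv_im _ _ _ (hPx x y)
    have h2 : ∀ x y, pdy (c1 u2) x y = (B x y).im := fun x y => by
      rw [hu2]; exact deriv_im _ _ _ (hPy x y)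
    have h3 : ∀ x y, pdx (c2 u2) x y = (C x y).im := fun x y => by
      rw [hu2]; exact deriv_im _ _ _ (hQx x y)
    have h4 : ∀ x y, pdy (c2 u2) x y = (D x y).im := fun x y => by
      rw [hu2]; exact deriv_im _ _ _ (hQy x y)
    unfold trilinG
    simp only [h1, h2, h3, h4]
    rw [hu1]
    rfl
  have v1 : c1 v = S := by rw [hv]; rfl
  have v2 : c2 v = T := by rw [hv]; rfl
  have w11 : c1 w1 = fun x y => ((S x y).re : ℂ) := by rw [hw1, hv]; rfl
  have w12 : c2 w1 = fun x y => ((T x y).re : ℂ) := by rw [hw1, hv]; rfl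
  have w21 : c1 w2 = fun x y => ((S x y).im : ℂ) := by rw [hw2, hv]; rfl
  have w22 : c2 w2 = fun x y => ((T x y).im : ℂ) := by rw [hw2, hv]; rfl
  simp only [g1, g2, v1, v2, w11, w12, w21, w22]
  have cP : Continuous (Function.uncurry P) := by unfold Function.uncurry P; fun_prop
  have cQ : Continuous (Function.uncurry Q) := by unfold Function.uncurry Q; fun_prop
  have cA : Continuous (Function.uncurry A) := by unfold Function.uncurry A; fun_prop
  have cB : Continuous (Function.uncurry B) := by unfold Function.uncurry B; fun_prop
  have cC : Continuous (Function.uncurry C) := by unfold Function.uncurry C; fun_prop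
  have cD : Continuous (Function.uncurry D) := by unfold Function.uncurry D; fun_prop
  have cS : Continuous (Function.uncurry S) := by unfold Function.uncurry S; fun_prop
  have cT : Continuous (Function.uncurry T) := by unfold Function.uncurry T; fun_prop
  have cker : ∀ p q a b c d z w : ℝ → ℝ → ℂ, Continuous (Function.uncurry p) →
      Continuous (Function.uncurry q) → Continuous (Function.uncurry a) →
      Continuous (Function.uncurry b) → Continuous (Function.uncurry c) →
      Continuous (Function.uncurry d) → Continuous (Function.uncurry z) →
      Continuous (Function.uncurry w) → Continuous (Function.uncurry (fun x y =>
        ker (p x y) (q x y) (a x y) (b x y) (c x y) (d x y) (z x y) (w x y))) := by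
    intro p q a b c d z w hp hq ha hb hc hd hz hw
    exact (((hp.mul ha).add (hq.mul hb)).mul (Complex.continuous_conj.comp hz)).add
      (((hp.mul hc).add (hq.mul hd)).mul (Complex.continuous_conj.comp hw))
  have cre : ∀ p : ℝ → ℝ → ℂ, Continuous (Function.uncurry p) →
      Continuous (Function.uncurry (fun x y => ((p x y).re : ℂ))) := fun p hp =>
    Complex.continuous_ofReal.comp (Complex.continuous_re.comp hp)
  have cim : ∀ p : ℝ → ℝ → ℂ, Continuous (Function.uncurry p) →
      Continuous (Function.uncurry (fun x y => ((p x y).im : ℂ))) := fun p hp =>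
    Complex.continuous_ofReal.comp (Complex.continuous_im.comp hp)
  -- splitting in the test field
  have s1 : ∀ a b c d : ℝ → ℝ → ℂ, Continuous (Function.uncurry a) →
      Continuous (Function.uncurry b) → Continuous (Function.uncurry c) →
      Continuous (Function.uncurry d) → ∀ L, dbl L (fun x y =>
      ker (P x y).re (Q x y).re (a x y) (b x y) (c x y) (d x y) (S x y) (T x y)) =
      dbl L (fun x y =>
      ker (P x y).re (Q x y).re (a x y) (b x y) (c x y) (d x y) (S x y).re (T x y).re)
      - Complex.I * dbl L (fun x y =>
      ker (P x y).re (Q x y).re (a x y) (b x y) (c x y) (d x y) (S x y).im (T x y).im) := by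
    intro a b c d ha hb hc hd L
    rw [← dbl_lin L _ _
      (cker _ _ _ _ _ _ _ _ (cre P cP) (cre Q cQ) ha hb hc hd (cre S cS) (cre T cT))
      (cker _ _ _ _ _ _ _ _ (cre P cP) (cre Q cQ) ha hb hc hd (cim S cS) (cim T cT))]
    congr 1
    funext x y
    exact ker_split _ _ _ _ _ _ _ _
  have sR := s1 _ _ _ _ (cre A cA) (cre B cB) (cre C cC) (cre D cD) (2 / a)
  have sI := s1 _ _ _ _ (cim A cA) (cim B cB) (cim C cC) (cim D cD) (2 / a)
  -- the complex identity
  have key : dbl (2 / a) (fun x y =>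
      ker (P x y).re (Q x y).re (A x y).re (B x y).re (C x y).re (D x y).re (S x y) (T x y))
      - Complex.I * dbl (2 / a) (fun x y =>
      ker (P x y).re (Q x y).re (A x y).im (B x y).im (C x y).im (D x y).im (S x y) (T x y))
      = 0 := by
    rw [← dbl_lin (2 / a) _ _
      (cker _ _ _ _ _ _ _ _ (cre P cP) (cre Q cQ) (cre A cA) (cre B cB) (cre C cC) (cre D cD)
        cS cT)
      (cker _ _ _ _ _ _ _ _ (cre P cP) (cre Q cQ) (cim A cA) (cim B cB) (cim C cC) (cim D cD)
        cS cT)]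
    let cj := starRingEnd ℂ
    let M : ℝ → ℂ := fun y =>
      (deriv Y y / 2 * (-(Complex.I * k * cj (deriv Y y)))
        + (-(Complex.I * k * Y y)) / 2 * cj (deriv (deriv Y) y)) * cj (deriv Z y)
      + (deriv Y y / 2 * (-(Complex.I * k * (Complex.I * k) * cj (Y y)))
        + (-(Complex.I * k * Y y)) / 2 * (Complex.I * k * cj (deriv Y y)))
        * (Complex.I * (2 * k) * cj (Z y))
    let N : ℝ → ℂ := fun y =>
      (cj (deriv Y y) / 2 * (-(Complex.I * k * cj (deriv Y y)))
        + (Complex.I * k * cj (Y y)) / 2 * cj (deriv (deriv Y) y)) * cj (deriv Z y)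
      + (cj (deriv Y y) / 2 * (-(Complex.I * k * (Complex.I * k) * cj (Y y)))
        + (Complex.I * k * cj (Y y)) / 2 * (Complex.I * k * cj (deriv Y y)))
        * (Complex.I * (2 * k) * cj (Z y))
    have cM : Continuous M := by
      have : Continuous cj := Complex.continuous_conj
      unfold M; fun_prop
    have cN : Continuous N := by
      have : Continuous cj := Complex.continuous_conj
      unfold N; fun_prop
    have hpt : (fun x y =>
        ker (P x y).re (Q x y).re (A x y).re (B x y).re (C x y).re (D x y).re (S x y) (T x y)
        - Complex.I *
        ker (P x y).re (Q x y).re (A x y).im (B x y).im (C x y).im (D x y).im (S x y) (T x y))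
        = fun x y => zexp (-(2 * k)) x * M y - (-1) * (zexp (-(2 * (2 * k))) x * N y) := by
      funext x y
      rw [ker_conj, ← zexp_conj, ← zexp_conj, zexp_two (2 * k), zexp_two k]
      have hE := zexp_mul_conj k x
      simp only [P, Q, A, B, C, D, S, T, M, N, cj, zexp_two k, map_mul, map_neg, map_pow,
        Complex.conj_I, Complex.conj_ofReal]
      generalize (starRingEnd ℂ) (zexp k x) = F at *
      generalize zexp k x = E at *
      push_cast
      linear_combination (F ^ 2 * ((deriv Y y / 2 * (-(Complex.I * k * starRingEnd ℂ (deriv Y y)))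
        + (-(Complex.I * k * Y y)) / 2 * starRingEnd ℂ (deriv (deriv Y) y)) * starRingEnd ℂ (deriv Z y)
      + (deriv Y y / 2 * (-(Complex.I * k * (Complex.I * k) * starRingEnd ℂ (Y y)))
        + (-(Complex.I * k * Y y)) / 2 * (Complex.I * k * starRingEnd ℂ (deriv Y y)))
        * (Complex.I * (2 * k) * starRingEnd ℂ (Z y)))) * hE
    rw [hpt, dbl_lin (2 / a) (fun x y => zexp (-(2 * k)) x * M y)
      (fun x y => zexp (-(2 * (2 * k))) x * N y)
      (((zexp_continuous _).comp continuous_fst).mul (cM.comp continuous_snd))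
      (((zexp_continuous _).comp continuous_fst).mul (cN.comp continuous_snd)),
      dbl_sep _ _ _ i2, dbl_sep _ _ _ i4]
    simp
  simp only [sR, sI] at key ⊢
  simp only [ker_real] at key ⊢
  obtain ⟨r1, hr1⟩ := dbl_real (2 / a) (fun x y => ((P x y).re * (A x y).re + (Q x y).re * (B x y).re) * (S x y).re + ((P x y).re * (C x y).re + (Q x y).re * (D x y).re) * (T x y).re)
  obtain ⟨r2, hr2⟩ := dbl_real (2 / a) (fun x y => ((P x y).re * (A x y).re + (Q x y).re * (B x y).re) * (S x y).im + ((P x y).re * (C x y).re + (Q x y).re * (D x y).re) * (T x y).im)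
  obtain ⟨j1, hj1⟩ := dbl_real (2 / a) (fun x y => ((P x y).re * (A x y).im + (Q x y).re * (B x y).im) * (S x y).re + ((P x y).re * (C x y).im + (Q x y).re * (D x y).im) * (T x y).re)
  obtain ⟨j2, hj2⟩ := dbl_real (2 / a) (fun x y => ((P x y).re * (A x y).im + (Q x y).re * (B x y).im) * (S x y).im + ((P x y).re * (C x y).im + (Q x y).re * (D x y).im) * (T x y).im)
  rw [hr1, hr2, hj1, hj2] at key
  rw [hr1, hr2, hj1, hj2]
  have k1 := congrArg Complex.re key
  have k2 := congrArg Complex.im key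
  simp at k1 k2
  have q1 : r1 = j2 := by linarith
  have q2 : r2 = -j1 := by linarith
  refine ⟨by rw [q1], by rw [q2]; push_cast; ring, ?_⟩
  linear_combination (-(ε : ℂ)) * key
end
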